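/- Let α ∈ ℂ∖ℝ be a constant and π : ℝ³ → M_n(ℂ) a smooth map with π* = π and π² = π (a Hermitian-projection-valued map); set π^⊥ = 1 − π and g_{α,π}(x,y,t,τ) = 1 + ((α−ᾱ)/(τ−α))·π^⊥(x,y,t) for τ ∈ ℂ∖{α,ᾱ}. Then the following are equivalent: (a) there exist maps P, Q : ℝ³ → M_n(ℂ) such that (τ∂_yg_{α,π} − ∂_ξg_{α,π})g_{α,π}⁻¹ = P and (τ∂_ηg_{α,π} − ∂_yg_{α,π})g_{α,π}⁻¹ = Q for every τ ∈ ℂ∖{α,ᾱ} (i.e. these expressions are independent of τ); (b) π satisfies the 1-soliton equations (α∂_yπ − ∂_ξπ)π = 0 and (α∂_ηπ − ∂_yπ)π = 0. -/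

import Mathlib

open Matrix Complex
open scoped Matrix ComplexConjugate

attribute [local instance] Matrix.normedAddCommGroup Matrix.normedSpace

noncomputable section

/-- `n × n` complex matrices. -/
abbrev Mat (n : ℕ) := Matrix (Fin n) (Fin n) ℂ

/-- Space-time `ℝ³` with coordinates `(x, y, t)`. -/
abbrev P3 : Type := ℝ × ℝ × ℝ

section PartialDerivatives

variable {W : Type*} [NormedAddCommGroup W] [NormedSpace ℝ W]

/-- Partial derivative in `x`. -/
def pdx (f : P3 → W) (p : P3) : W := deriv (fun s => f (s, p.2.1, p.2.2)) p.1

/-- Partial derivative in `y`. -/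
def pdy (f : P3 → W) (p : P3) : W := deriv (fun s => f (p.1, s, p.2.2)) p.2.1

/-- Partial derivative in `t`. -/
def pdt (f : P3 → W) (p : P3) : W := deriv (fun s => f (p.1, p.2.1, s)) p.2.2

/-- Light-cone derivative `∂_ξ = ∂_t + ∂_x`. -/
def pdxi (f : P3 → W) (p : P3) : W := pdt f p + pdx f p

/-- Light-cone derivative `∂_η = ∂_t − ∂_x`. -/
def pdeta (f : P3 → W) (p : P3) : W := pdt f p - pdx f p

end PartialDerivatives

/-- `∂_z = ½(∂_x − i ∂_y)`. -/
def pdz {n : ℕ} (f : P3 → Mat n) (p : P3) : Mat n :=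
  (2⁻¹ : ℂ) • (pdx f p - Complex.I • pdy f p)

/-- `∂_z̄ = ½(∂_x + i ∂_y)`. -/
def pdzbar {n : ℕ} (f : P3 → Mat n) (p : P3) : Mat n :=
  (2⁻¹ : ℂ) • (pdx f p + Complex.I • pdy f p)

/-- Commutator `[X, Y] = XY − YX`. -/
def brk {n : ℕ} (X Y : Mat n) : Mat n := X * Y - Y * X

/-- Anti-Hermitian-valued map. -/
def SkewHerm {n : ℕ} (f : P3 → Mat n) : Prop := ∀ p : P3, (f p)ᴴ = -(f p)

/-- The space-time monopole equation `F_{xy} = −∇_tφ`, `F_{xt} = −∇_yφ`, `F_{yt} = ∇_xφ`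
for the connection `(Ax, Ay, At)` and Higgs field `Ph`, at the point `p`. -/
def MonopoleEqAt {n : ℕ} (Ax Ay At Ph : P3 → Mat n) (p : P3) : Prop :=
  (-(pdx Ay p) + pdy Ax p + brk (Ax p) (Ay p) = -(pdt Ph p - brk (At p) (Ph p))) ∧
  (-(pdx At p) + pdt Ax p + brk (Ax p) (At p) = -(pdy Ph p - brk (Ay p) (Ph p))) ∧
  (-(pdy At p) + pdt Ay p + brk (Ay p) (At p) = pdx Ph p - brk (Ax p) (Ph p))

/-- The space-time monopole equation on all of `ℝ³`. -/
def MonopoleEq {n : ℕ} (Ax Ay At Ph : P3 → Mat n) : Prop :=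
  ∀ p : P3, MonopoleEqAt Ax Ay At Ph p

/-- `E` solves the `μ`-linear system for `(A, φ)`. -/
def SolvesMu {n : ℕ} (Ax Ay At Ph : P3 → Mat n) (μ : ℂ) (E : P3 → Mat n) : Prop :=
  ∀ p : P3,
    (2⁻¹ : ℂ) • pdt E p + μ • pdz E p =
      ((2⁻¹ : ℂ) • (At p + Complex.I • Ph p) +
        μ • ((2⁻¹ : ℂ) • (Ax p - Complex.I • Ay p))) * E p ∧
    (2⁻¹ : ℂ) • pdt E p + μ⁻¹ • pdzbar E p =
      ((2⁻¹ : ℂ) • (At p - Complex.I • Ph p) +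
        μ⁻¹ • ((2⁻¹ : ℂ) • (Ax p + Complex.I • Ay p))) * E p

/-- `F` solves the `λ`-linear system for `(A, φ)`. -/
def SolvesLam {n : ℕ} (Ax Ay At Ph : P3 → Mat n) (lm : ℂ) (F : P3 → Mat n) : Prop :=
  ∀ p : P3,
    lm • pdxi F p - pdy F p = (lm • (At p + Ax p) - (Ay p + Ph p)) * F p ∧
    lm⁻¹ • pdeta F p - pdy F p = (lm⁻¹ • (At p - Ax p) - (Ay p - Ph p)) * F p

/-- The simple-element `g_{α,π}(τ) = 1 + ((α−ᾱ)/(τ−α))·π^⊥`. -/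
def solg {n : ℕ} (a : ℂ) (Pr : P3 → Mat n) (p : P3) (τ : ℂ) : Mat n :=
  1 + ((a - conj a) / (τ - a)) • ((1 : Mat n) - Pr p)

/-- The inverse `g_{α,π}(τ)⁻¹ = 1 + ((ᾱ−α)/(τ−ᾱ))·π^⊥`. -/
def solginv {n : ℕ} (a : ℂ) (Pr : P3 → Mat n) (p : P3) (τ : ℂ) : Mat n :=
  1 + ((conj a - a) / (τ - conj a)) • ((1 : Mat n) - Pr p)

/-!
Write `D_w` for the derivative in a direction `w`. Expanding in partial fractions in `τ`,

`(τ D_v g − D_u g) g⁻¹`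
`  = (ᾱ − α) (D_v π + (τ − α)⁻¹ (α D_v π − D_u π) π + (τ − ᾱ)⁻¹ (ᾱ D_v π − D_u π) π^⊥)`,

so independence of `τ` forces the residue at `α` to vanish. Conversely, differentiating `π² = π`
gives `(D_w π) π^⊥ = π (D_w π)`, hence the residue at `ᾱ` is the adjoint of the residue at `α`, and
both vanish together. The two equations are the cases `(u, v) = (ξ, y)` and `(u, v) = (y, η)`.
-/

open scoped Topology

section SimplePole

variable {𝕜 E : Type*} [NontriviallyNormedField 𝕜] [AddCommGroup E] [Module 𝕜 E]
  [TopologicalSpace E] [ContinuousSMul 𝕜 E] [T2Space E]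

lemma eq_zero_of_inv_sub_smul_eventuallyEq {a : 𝕜} {r : E} {f : 𝕜 → E} (hf : ContinuousAt f a)
    (h : ∀ᶠ τ in 𝓝[≠] a, (τ - a)⁻¹ • r = f τ) : r = 0 := by
  have hlim : Filter.Tendsto (fun τ => (τ - a) • f τ) (𝓝[≠] a) (𝓝 0) := by
    have hcont : ContinuousAt (fun τ => (τ - a) • f τ) a := by fun_prop
    simpa only [ContinuousAt, sub_self, zero_smul] using hcont.mono_left nhdsWithin_le_nhds
  refine tendsto_nhds_unique (tendsto_const_nhds.congr' ?_) hlim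
  filter_upwards [h, self_mem_nhdsWithin] with τ hτ hne
  rw [← hτ, smul_inv_smul₀ (sub_ne_zero.2 hne)]

end SimplePole

section SimpleFactor

variable {K A : Type*} [Field K] [Ring A] [Algebra K A]

/-- The simple element `g(τ) = 1 + ((a − b)/(τ − a)) (1 − e)` of the loop group attached to an
idempotent `e`, with pole `a` and zero `b`. Exchanging `a` and `b` inverts it, so `g_{α,π}` is
`simpleFactor α ᾱ π` and its inverse is `simpleFactor ᾱ α π`. -/
def simpleFactor (a b : K) (e : A) (τ : K) : A :=
  1 + ((a - b) / (τ - a)) • (1 - e)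

lemma smul_sub_mul_simpleFactor {a b τ : K} (ha : τ ≠ a) (hb : τ ≠ b) (e X Y : A) :
    (τ • -(((a - b) / (τ - a)) • Y) - -(((a - b) / (τ - a)) • X)) * simpleFactor b a e τ =
      (b - a) • (Y + (τ - a)⁻¹ • ((a • Y - X) * e) + (τ - b)⁻¹ • ((b • Y - X) * (1 - e))) := by
  have ha' : τ - a ≠ 0 := sub_ne_zero.2 ha
  have hb' : τ - b ≠ 0 := sub_ne_zero.2 hb
  simp only [simpleFactor, mul_add, mul_sub, sub_mul, mul_one, smul_mul_assoc, mul_smul_comm,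
    neg_mul]
  match_scalars <;> field_simp <;> ring

end SimpleFactor

lemma star_smul_sub_mul {K A : Type*} [CommRing K] [StarRing K] [Ring A] [StarRing A] [Algebra K A]
    [StarModule K A] {e X Y : A} (he : IsSelfAdjoint e) (hX : IsSelfAdjoint X)
    (hY : IsSelfAdjoint Y) (hXe : X * (1 - e) = e * X) (hYe : Y * (1 - e) = e * Y) (a : K) :
    star ((a • Y - X) * e) = (star a • Y - X) * (1 - e) := by
  simp only [star_mul, star_sub, star_smul, he.star_eq, hX.star_eq, hY.star_eq]
  rw [sub_mul, smul_mul_assoc, hXe, hYe, mul_sub, mul_smul_comm]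

section DirectionalDerivative

variable {𝕜 E A : Type*} [NontriviallyNormedField 𝕜] [NormedAddCommGroup E] [NormedSpace 𝕜 E]
  [NormedRing A] [NormedAlgebra 𝕜 A] {π : E → A} {p : E}

lemma fderiv_mul_one_sub_of_isIdempotentElem (hπ : DifferentiableAt 𝕜 π p)
    (hidem : ∀ q, IsIdempotentElem (π q)) (w : E) :
    fderiv 𝕜 π p w * (1 - π p) = π p * fderiv 𝕜 π p w := by
  have hprod : fderiv 𝕜 (fun q => π q * π q) p w =
      π p * fderiv 𝕜 π p w + fderiv 𝕜 π p w * π p := by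
    simp [fderiv_fun_mul' hπ hπ]
  simp only [(hidem _).eq] at hprod
  rw [mul_sub, mul_one, sub_eq_iff_eq_add, ← hprod]

lemma isSelfAdjoint_fderiv [StarRing 𝕜] [TrivialStar 𝕜] [StarRing A] [StarModule 𝕜 A]
    [ContinuousStar A] (hsa : ∀ q, IsSelfAdjoint (π q)) (w : E) :
    IsSelfAdjoint (fderiv 𝕜 π p w) := by
  have hstar : fderiv 𝕜 (fun q => star (π q)) p w = star (fderiv 𝕜 π p w) := by
    simp [fderiv_star]
  simp only [(hsa _).star_eq] at hstar
  exact hstar.symm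

lemma star_smul_fderiv_sub_mul_one_sub {K : Type*} [CommRing K] [StarRing K] [Algebra K A]
    [StarRing 𝕜] [TrivialStar 𝕜] [StarRing A] [StarModule 𝕜 A] [StarModule K A] [ContinuousStar A]
    (hπ : DifferentiableAt 𝕜 π p) (hproj : ∀ q, IsStarProjection (π q)) (a : K) (u v : E) :
    (star a • fderiv 𝕜 π p v - fderiv 𝕜 π p u) * (1 - π p) =
      star ((a • fderiv 𝕜 π p v - fderiv 𝕜 π p u) * π p) := by
  have hsa := isSelfAdjoint_fderiv (𝕜 := 𝕜) (p := p) fun q => (hproj q).isSelfAdjoint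
  have hidem := fderiv_mul_one_sub_of_isIdempotentElem hπ fun q => (hproj q).isIdempotentElem
  exact (star_smul_sub_mul (hproj p).isSelfAdjoint (hsa u) (hsa v) (hidem u) (hidem v) a).symm

lemma fderiv_simpleFactor {K : Type*} [Field K] [Algebra K A] [SMulCommClass 𝕜 K A]
    (hπ : DifferentiableAt 𝕜 π p) (a b τ : K) (w : E) :
    fderiv 𝕜 (fun q => simpleFactor a b (π q) τ) p w =
      -(((a - b) / (τ - a)) • fderiv 𝕜 π p w) := by
  simp [simpleFactor, fderiv_fun_const_smul (hπ.const_sub 1), fderiv_const_sub]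

end DirectionalDerivative

section SolitonEquation

variable {𝕜 K E A : Type*} [NontriviallyNormedField 𝕜] [NormedAddCommGroup E] [NormedSpace 𝕜 E]
  [NormedRing A] [NormedAlgebra 𝕜 A] {π : E → A} {p : E}

section PartialFractions

variable [Field K] [Algebra K A]

variable (𝕜) in
/-- The expression `(τ D_v g − D_u g) g⁻¹` at the point `p`, for `g = simpleFactor a b π` and the
derivatives `D_u`, `D_v` in the directions `u`, `v`. -/
def laxQuotient (a b : K) (π : E → A) (u v p : E) (τ : K) : A :=
  (τ • fderiv 𝕜 (fun q => simpleFactor a b (π q) τ) p v -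
    fderiv 𝕜 (fun q => simpleFactor a b (π q) τ) p u) * simpleFactor b a (π p) τ

lemma laxQuotient_eq [SMulCommClass 𝕜 K A] (hπ : DifferentiableAt 𝕜 π p) {a b τ : K}
    (ha : τ ≠ a) (hb : τ ≠ b) (u v : E) :
    laxQuotient 𝕜 a b π u v p τ = (b - a) • (fderiv 𝕜 π p v +
      (τ - a)⁻¹ • ((a • fderiv 𝕜 π p v - fderiv 𝕜 π p u) * π p) +
      (τ - b)⁻¹ • ((b • fderiv 𝕜 π p v - fderiv 𝕜 π p u) * (1 - π p))) := by
  simp only [laxQuotient, fderiv_simpleFactor hπ, smul_sub_mul_simpleFactor ha hb]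

end PartialFractions

variable [NontriviallyNormedField K] [Algebra K A] [ContinuousSMul K A] [SMulCommClass 𝕜 K A]

lemma residue_eq_zero_of_laxQuotient_eq (hπ : DifferentiableAt 𝕜 π p) {a b : K} (hab : a ≠ b)
    {u v : E} {C : A} (hC : ∀ τ, τ ≠ a → τ ≠ b → laxQuotient 𝕜 a b π u v p τ = C) :
    (a • fderiv 𝕜 π p v - fderiv 𝕜 π p u) * π p = 0 := by
  set S := (b • fderiv 𝕜 π p v - fderiv 𝕜 π p u) * (1 - π p)
  have hcont : ContinuousAt
      (fun τ => (b - a)⁻¹ • C - fderiv 𝕜 π p v - (τ - b)⁻¹ • S) a := by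
    have := sub_ne_zero.2 hab
    fun_prop (disch := assumption)
  refine eq_zero_of_inv_sub_smul_eventuallyEq hcont ?_
  filter_upwards [self_mem_nhdsWithin, eventually_ne_nhdsWithin hab] with τ hτa hτb
  rw [← hC τ hτa hτb, laxQuotient_eq hπ hτa hτb, inv_smul_smul₀ (sub_ne_zero.2 hab.symm)]
  abel

theorem exists_laxQuotient_eq_iff [StarRing 𝕜] [TrivialStar 𝕜] [StarRing K] [StarRing A]
    [StarModule 𝕜 A] [StarModule K A] [ContinuousStar A] (hπ : DifferentiableAt 𝕜 π p)
    (hproj : ∀ q, IsStarProjection (π q)) {a : K} (ha : a ≠ star a) (u v : E) :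
    (∃ C, ∀ τ, τ ≠ a → τ ≠ star a → laxQuotient 𝕜 a (star a) π u v p τ = C) ↔
      (a • fderiv 𝕜 π p v - fderiv 𝕜 π p u) * π p = 0 := by
  constructor
  · rintro ⟨C, hC⟩
    exact residue_eq_zero_of_laxQuotient_eq hπ ha hC
  · intro hres
    refine ⟨(star a - a) • fderiv 𝕜 π p v, fun τ hτ hτ' => ?_⟩
    rw [laxQuotient_eq hπ hτ hτ', star_smul_fderiv_sub_mul_one_sub hπ hproj, hres]
    simp only [star_zero, smul_zero, add_zero]

end SolitonEquation

section LightCone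

variable {W : Type*} [NormedAddCommGroup W] [NormedSpace ℝ W] {f : P3 → W} {p : P3}

lemma pdx_eq_fderiv (hf : DifferentiableAt ℝ f p) : pdx f p = fderiv ℝ f p (1, 0, 0) :=
  (hf.hasFDerivAt.comp_hasDerivAt p.1
    ((hasDerivAt_id _).prodMk (hasDerivAt_const _ (p.2.1, p.2.2)))).deriv

lemma pdy_eq_fderiv (hf : DifferentiableAt ℝ f p) : pdy f p = fderiv ℝ f p (0, 1, 0) :=
  (hf.hasFDerivAt.comp_hasDerivAt p.2.1
    ((hasDerivAt_const _ p.1).prodMk ((hasDerivAt_id _).prodMk (hasDerivAt_const _ p.2.2)))).deriv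

lemma pdt_eq_fderiv (hf : DifferentiableAt ℝ f p) : pdt f p = fderiv ℝ f p (0, 0, 1) :=
  (hf.hasFDerivAt.comp_hasDerivAt p.2.2
    ((hasDerivAt_const _ p.1).prodMk ((hasDerivAt_const _ p.2.1).prodMk (hasDerivAt_id _)))).deriv

lemma pdxi_eq_fderiv (hf : DifferentiableAt ℝ f p) : pdxi f p = fderiv ℝ f p (1, 0, 1) := by
  rw [pdxi, pdt_eq_fderiv hf, pdx_eq_fderiv hf, ← map_add]
  simp

lemma pdeta_eq_fderiv (hf : DifferentiableAt ℝ f p) : pdeta f p = fderiv ℝ f p (-1, 0, 1) := by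
  rw [pdeta, pdt_eq_fderiv hf, pdx_eq_fderiv hf, ← map_sub]
  simp

end LightCone

theorem one_soliton_characterization_general {K A : Type*}
    [NontriviallyNormedField K] [StarRing K] [NormedRing A] [NormedAlgebra ℝ A] [Algebra K A]
    [ContinuousSMul K A] [SMulCommClass ℝ K A] [StarRing A] [StarModule ℝ A] [StarModule K A]
    [ContinuousStar A] {a : K} (ha : a ≠ star a) {π : P3 → A} (hπ : Differentiable ℝ π)
    (hproj : ∀ p, IsStarProjection (π p)) :
    (∃ P Q : P3 → A, ∀ τ : K, τ ≠ a → τ ≠ star a → ∀ p : P3,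
        (τ • pdy (fun r => simpleFactor a (star a) (π r) τ) p -
            pdxi (fun r => simpleFactor a (star a) (π r) τ) p) *
          simpleFactor (star a) a (π p) τ = P p ∧
        (τ • pdeta (fun r => simpleFactor a (star a) (π r) τ) p -
            pdy (fun r => simpleFactor a (star a) (π r) τ) p) *
          simpleFactor (star a) a (π p) τ = Q p) ↔
      ∀ p : P3, (a • pdy π p - pdxi π p) * π p = 0 ∧ (a • pdeta π p - pdy π p) * π p = 0 := by
  have hg (τ : K) : Differentiable ℝ fun r => simpleFactor a (star a) (π r) τ :=
    ((hπ.const_sub 1).fun_const_smul _).const_add 1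
  simp only [pdy_eq_fderiv (hg _ _), pdxi_eq_fderiv (hg _ _), pdeta_eq_fderiv (hg _ _),
    pdy_eq_fderiv (hπ _), pdxi_eq_fderiv (hπ _), pdeta_eq_fderiv (hπ _),
    ← exists_laxQuotient_eq_iff (hπ _) hproj ha]
  constructor
  · rintro ⟨P, Q, h⟩ p
    exact ⟨⟨P p, fun τ hτ hτ' => (h τ hτ hτ' p).1⟩, ⟨Q p, fun τ hτ hτ' => (h τ hτ hτ' p).2⟩⟩
  · intro h
    choose P hP using fun p => (h p).1
    choose Q hQ using fun p => (h p).2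
    exact ⟨P, Q, fun τ hτ hτ' p => ⟨hP p τ hτ hτ', hQ p τ hτ hτ'⟩⟩

/-- `g_{α,π}` is a 1-soliton Ward frame, i.e. the expressions
`(τ∂_y g − ∂_ξ g)g⁻¹` and `(τ∂_η g − ∂_y g)g⁻¹` are independent of `τ`, iff `π` solves the
1-soliton equations `(α∂_yπ − ∂_ξπ)π = 0` and `(α∂_ηπ − ∂_yπ)π = 0`. -/
theorem one_soliton_characterization {n : ℕ} (a : ℂ) (ha : a.im ≠ 0)
    (Pr : P3 → Mat n) (hPrs : ContDiff ℝ (⊤ : ℕ∞) Pr)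
    (hherm : ∀ p : P3, (Pr p)ᴴ = Pr p) (hidem : ∀ p : P3, Pr p * Pr p = Pr p) :
    (∃ P Q : P3 → Mat n, ∀ τ : ℂ, τ ≠ a → τ ≠ conj a → ∀ p : P3,
        (τ • pdy (fun r => solg a Pr r τ) p - pdxi (fun r => solg a Pr r τ) p) *
            solginv a Pr p τ = P p ∧
        (τ • pdeta (fun r => solg a Pr r τ) p - pdy (fun r => solg a Pr r τ) p) *
            solginv a Pr p τ = Q p) ↔
      (∀ p : P3, (a • pdy Pr p - pdxi Pr p) * Pr p = 0 ∧
        (a • pdeta Pr p - pdy Pr p) * Pr p = 0) := by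
  -- The entrywise sup norm is not submultiplicative; the Frobenius norm is, and it has
  -- definitionally the same topology, so the partial derivatives of `Pr` do not change.
  let := Matrix.frobeniusNormedRing (m := Fin n) (α := ℂ)
  let := Matrix.frobeniusNormedAlgebra (R := ℝ) (m := Fin n) (α := ℂ)
  let := Matrix.frobeniusNormedAlgebra (R := ℂ) (m := Fin n) (α := ℂ)
  have := Matrix.frobenius_normedStarGroup (m := Fin n) (α := ℂ)
  exact one_soliton_characterization_general (mt (conj_eq_iff_im.1 ·.symm) ha)
    (hPrs.differentiable (by simp)) fun p => ⟨hidem p, hherm p⟩
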